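/- arXiv:2507.02077 — 2 statements merged into one kernel-verified Lean document; each statement's English description precedes it below -/
import Mathlib

section
/- For every pair j ≠ k, the function T^{j,k} satisfies a ΔT^{j,k} + ∇a · ∇T^{j,k} = 0 at every point of U; that is, a Σ_{i=1}^n ∂_{ii}T^{j,k} + Σ_{i=1}^n (∂_i a)(∂_i T^{j,k}) = 0. -/
/-- Partial derivative in direction `i` of a function on `ℝⁿ`. -/
noncomputable def pd {n : ℕ} (i : Fin n) (f : EuclideanSpace ℝ (Fin n) → ℝ)
    (x : EuclideanSpace ℝ (Fin n)) : ℝ :=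
  fderiv ℝ f x (EuclideanSpace.single i 1)

/-!
For vector fields, `div [X, V] = X (div V) - V (div X)`, and a Killing field `X` is divergence free.
Skewness of `DX` gives `∇(X u) = [X, ∇u]`, and `a [X, ∇u] = [X, a ∇u]` when `X a = 0`. Hence
`div (a ∇(X u)) = div [X, a ∇u] = X (div (a ∇u))`: the operator `u ↦ div (a ∇u)` commutes with every
infinitesimal isometry preserving `a`. The function `T j k` is `X u` for `X` the infinitesimal
rotation in the `(j, k)`-plane, and `a` is radial exactly when these rotations preserve it.
-/

open Filter Topology Gradient InnerProductSpace VectorField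

section LieDerivative

variable {E F : Type*} [NormedAddCommGroup E] [NormedSpace ℝ E] [NormedAddCommGroup F]
  [NormedSpace ℝ F] {x : E}

theorem differentiableAt_fderiv {g : E → F} (hg : ContDiffAt ℝ 2 g x) :
    DifferentiableAt ℝ (fderiv ℝ g) x :=
  (hg.fderiv_right (m := 1) one_add_one_eq_two.le).differentiableAt one_ne_zero

theorem flip_fderiv_fderiv {g : E → F} (hg : ContDiffAt ℝ 2 g x) :
    (fderiv ℝ (fderiv ℝ g) x).flip = fderiv ℝ (fderiv ℝ g) x := by
  ext v w
  exact hg.isSymmSndFDerivAt (by simp) w v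

theorem fderiv_lieBracket {X V : E → E} (hX : ContDiffAt ℝ 2 X x) (hV : ContDiffAt ℝ 2 V x) :
    fderiv ℝ (lieBracket ℝ X V) x
      = (fderiv ℝ V x ∘L fderiv ℝ X x + fderiv ℝ (fderiv ℝ V) x (X x))
        - (fderiv ℝ X x ∘L fderiv ℝ V x + fderiv ℝ (fderiv ℝ X) x (V x)) := by
  have hX' := hX.differentiableAt two_ne_zero
  have hV' := hV.differentiableAt two_ne_zero
  have hDX := differentiableAt_fderiv hX
  have hDV := differentiableAt_fderiv hV
  rw [lieBracket_eq, fderiv_fun_sub (hDV.clm_apply hX') (hDX.clm_apply hV'),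
    fderiv_clm_apply hDV hX', fderiv_clm_apply hDX hV', flip_fderiv_fderiv hV,
    flip_fderiv_fderiv hX]

/-- The Lie derivative `X f` of a function `f` along a vector field `X`. -/
noncomputable def lieDeriv (X : E → E) (f : E → ℝ) (x : E) : ℝ :=
  fderiv ℝ f x (X x)

theorem contDiffOn_lieDeriv {m n : WithTop ℕ∞} {U : Set E} {X : E → E} {f : E → ℝ}
    (hU : IsOpen U) (hX : ContDiffOn ℝ m X U) (hf : ContDiffOn ℝ n f U) (hmn : m + 1 ≤ n) :
    ContDiffOn ℝ m (lieDeriv X f) U :=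
  (hf.fderiv_of_isOpen hU hmn).clm_apply hX

theorem lieDeriv_eq_zero_of_eventuallyEq_zero {f : E → ℝ} (hf : f =ᶠ[𝓝 x] 0) (X : E → E) :
    lieDeriv X f x = 0 := by
  simp [lieDeriv, hf.fderiv_eq]

/-- The divergence of a vector field `V`, as the trace of its derivative. It has the junk value `0`
where `V` is not differentiable, and everywhere if `E` is infinite-dimensional. -/
noncomputable def divergence (V : E → E) (x : E) : ℝ :=
  LinearMap.trace ℝ E (fderiv ℝ V x)

theorem divergence_congr {V W : E → E} (h : V =ᶠ[𝓝 x] W) : divergence V x = divergence W x := by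
  rw [divergence, h.fderiv_eq, divergence]

variable [FiniteDimensional ℝ E]

theorem lieDeriv_divergence {V : E → E} (hV : ContDiffAt ℝ 2 V x) (X : E → E) :
    lieDeriv X (divergence V) x = LinearMap.trace ℝ E (fderiv ℝ (fderiv ℝ V) x (X x)) := by
  let tr : (E →L[ℝ] E) →L[ℝ] ℝ :=
    LinearMap.toContinuousLinearMap (LinearMap.trace ℝ E ∘ₗ ContinuousLinearMap.coeLM ℝ)
  have hdiv : HasFDerivAt (divergence V) (tr ∘L fderiv ℝ (fderiv ℝ V) x) x :=
    tr.hasFDerivAt.comp x (differentiableAt_fderiv hV).hasFDerivAt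
  rw [lieDeriv, hdiv.fderiv]
  rfl

theorem divergence_lieBracket {X V : E → E} (hX : ContDiffAt ℝ 2 X x) (hV : ContDiffAt ℝ 2 V x) :
    divergence (lieBracket ℝ X V) x
      = lieDeriv X (divergence V) x - lieDeriv V (divergence X) x := by
  have trace_comm : LinearMap.trace ℝ E (fderiv ℝ V x ∘L fderiv ℝ X x : E →L[ℝ] E)
      = LinearMap.trace ℝ E (fderiv ℝ X x ∘L fderiv ℝ V x : E →L[ℝ] E) :=
    LinearMap.trace_mul_comm ℝ (fderiv ℝ V x : E →ₗ[ℝ] E) (fderiv ℝ X x : E →ₗ[ℝ] E)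
  rw [divergence, fderiv_lieBracket hX hV, lieDeriv_divergence hV, lieDeriv_divergence hX]
  simp only [ContinuousLinearMap.toLinearMap_sub, ContinuousLinearMap.toLinearMap_add, map_sub,
    map_add, trace_comm]
  ring

end LieDerivative

section Gradient

variable {E : Type*} [NormedAddCommGroup E] [InnerProductSpace ℝ E] [CompleteSpace E]
  {X : E → E} {a f : E → ℝ} {x : E}

theorem mem_skewAdjoint_iff_inner {A : E →L[ℝ] E} :
    A ∈ skewAdjoint (E →L[ℝ] E) ↔ ∀ v w, ⟪A v, w⟫_ℝ = -⟪v, A w⟫_ℝ := by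
  rw [skewAdjoint.mem_iff, ContinuousLinearMap.star_eq_adjoint, eq_comm,
    ContinuousLinearMap.eq_adjoint_iff]
  simp only [neg_apply, inner_neg_left, neg_eq_iff_eq_neg]

theorem contDiffAt_gradient {m n : WithTop ℕ∞} (hf : ContDiffAt ℝ n f x) (hmn : m + 1 ≤ n) :
    ContDiffAt ℝ m (∇ f) x :=
  (toDual ℝ E).symm.toContinuousLinearEquiv.contDiff.contDiffAt.comp x (hf.fderiv_right hmn)

theorem differentiableAt_gradient (hf : ContDiffAt ℝ 2 f x) : DifferentiableAt ℝ (∇ f) x :=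
  (contDiffAt_gradient (m := 1) hf one_add_one_eq_two.le).differentiableAt one_ne_zero

theorem inner_fderiv_gradient (f : E → ℝ) (x v w : E) :
    ⟪fderiv ℝ (∇ f) x v, w⟫_ℝ = fderiv ℝ (fderiv ℝ f) x v w := by
  let dual : E ≃L[ℝ] StrongDual ℝ E := (toDual ℝ E).toContinuousLinearEquiv
  have hdual : fderiv ℝ f = dual ∘ ∇ f := toDual_comp_gradient.symm
  rw [hdual, dual.comp_fderiv]
  rfl

theorem gradient_lieDeriv (hX : DifferentiableAt ℝ X x)
    (hskew : fderiv ℝ X x ∈ skewAdjoint (E →L[ℝ] E)) (hf : ContDiffAt ℝ 2 f x) :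
    ∇ (lieDeriv X f) x = lieBracket ℝ X (∇ f) x := by
  refine ext_inner_right ℝ fun v ↦ ?_
  calc ⟪∇ (lieDeriv X f) x, v⟫_ℝ
      = fderiv ℝ f x (fderiv ℝ X x v) + fderiv ℝ (fderiv ℝ f) x (X x) v := by
        unfold lieDeriv
        rw [inner_gradient_left, fderiv_clm_apply (differentiableAt_fderiv hf) hX,
          flip_fderiv_fderiv hf]
        rfl
    _ = ⟪∇ f x, fderiv ℝ X x v⟫_ℝ + ⟪fderiv ℝ (∇ f) x (X x), v⟫_ℝ := by
        rw [inner_gradient_left, inner_fderiv_gradient]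
    _ = ⟪lieBracket ℝ X (∇ f) x, v⟫_ℝ := by
        rw [lieBracket, inner_sub_left, mem_skewAdjoint_iff_inner.1 hskew]
        ring

theorem smul_gradient_lieDeriv (hX : DifferentiableAt ℝ X x)
    (hskew : fderiv ℝ X x ∈ skewAdjoint (E →L[ℝ] E)) (ha : DifferentiableAt ℝ a x)
    (hXa : lieDeriv X a x = 0) (hf : ContDiffAt ℝ 2 f x) :
    a x • ∇ (lieDeriv X f) x = lieBracket ℝ X (fun y ↦ a y • ∇ f y) x := by
  rw [lieDeriv] at hXa
  rw [gradient_lieDeriv hX hskew hf, lieBracket_smul_right ha (differentiableAt_gradient hf), hXa,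
    zero_smul, zero_add]

end Gradient

section Killing

variable {E : Type*} [NormedAddCommGroup E] [InnerProductSpace ℝ E] [FiniteDimensional ℝ E]
  {U : Set E} {X : E → E} {a f : E → ℝ} {x : E}

theorem trace_eq_zero_of_mem_skewAdjoint {A : E →L[ℝ] E} (hA : A ∈ skewAdjoint (E →L[ℝ] E)) :
    LinearMap.trace ℝ E A = 0 := by
  rw [LinearMap.trace_eq_sum_inner _ (stdOrthonormalBasis ℝ E)]
  refine Finset.sum_eq_zero fun i _ ↦ ?_
  have hskew := mem_skewAdjoint_iff_inner.1 hA (stdOrthonormalBasis ℝ E i)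
    (stdOrthonormalBasis ℝ E i)
  rw [real_inner_comm] at hskew
  exact self_eq_neg.1 hskew

/-- `X` is a Killing field on `U`, i.e. an infinitesimal isometry: its derivative is skew-adjoint at
each point of `U`. Differentiability of `X` is not included. -/
def IsKillingOn (X : E → E) (U : Set E) : Prop :=
  ∀ x ∈ U, fderiv ℝ X x ∈ skewAdjoint (E →L[ℝ] E)

theorem IsKillingOn.lieDeriv_divergence_eq_zero (hX : IsKillingOn X U) (hU : IsOpen U)
    (hx : x ∈ U) (V : E → E) : lieDeriv V (divergence X) x = 0 :=
  lieDeriv_eq_zero_of_eventuallyEq_zero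
    (eventually_of_mem (hU.mem_nhds hx) fun y hy ↦ trace_eq_zero_of_mem_skewAdjoint (hX y hy)) V

/-- The divergence-form operator `f ↦ div (a ∇f)` with scalar weight `a`. -/
noncomputable def weightedLaplacian (a f : E → ℝ) : E → ℝ :=
  divergence fun x ↦ a x • ∇ f x

theorem weightedLaplacian_lieDeriv (hU : IsOpen U) (hX : IsKillingOn X U)
    (hX₂ : ContDiffOn ℝ 2 X U) (ha : ContDiffOn ℝ 2 a U) (hXa : ∀ x ∈ U, lieDeriv X a x = 0)
    (hf : ContDiffOn ℝ 3 f U) (hx : x ∈ U) :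
    weightedLaplacian a (lieDeriv X f) x = lieDeriv X (weightedLaplacian a f) x := by
  have hXx := hX₂.contDiffAt (hU.mem_nhds hx)
  have hflux : ContDiffAt ℝ 2 (fun y ↦ a y • ∇ f y) x :=
    (ha.contDiffAt (hU.mem_nhds hx)).smul
      (contDiffAt_gradient (hf.contDiffAt (hU.mem_nhds hx)) two_add_one_eq_three.le)
  have flux_lieDeriv : ∀ y ∈ U,
      a y • ∇ (lieDeriv X f) y = lieBracket ℝ X (fun z ↦ a z • ∇ f z) y := fun y hy ↦
    have hy' := hU.mem_nhds hy
    smul_gradient_lieDeriv ((hX₂.contDiffAt hy').differentiableAt two_ne_zero) (hX y hy)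
      ((ha.contDiffAt hy').differentiableAt two_ne_zero) (hXa y hy)
      ((hf.contDiffAt hy').of_le (by norm_num))
  calc weightedLaplacian a (lieDeriv X f) x
      = divergence (lieBracket ℝ X fun y ↦ a y • ∇ f y) x :=
        divergence_congr (eventually_of_mem (hU.mem_nhds hx) flux_lieDeriv)
    _ = lieDeriv X (weightedLaplacian a f) x := by
        rw [divergence_lieBracket hXx hflux, hX.lieDeriv_divergence_eq_zero hU hx, sub_zero,
          weightedLaplacian]

theorem stmt9_general (hU : IsOpen U) (hX : IsKillingOn X U) (hX₂ : ContDiffOn ℝ 2 X U)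
    (ha : ContDiffOn ℝ 2 a U) (hXa : ∀ x ∈ U, lieDeriv X a x = 0) (hf : ContDiffOn ℝ 3 f U)
    (heq : ∀ x ∈ U, weightedLaplacian a f x = 0) :
    ∀ x ∈ U, weightedLaplacian a (lieDeriv X f) x = 0 := fun x hx ↦ by
  rw [weightedLaplacian_lieDeriv hU hX hX₂ ha hXa hf hx]
  exact lieDeriv_eq_zero_of_eventuallyEq_zero (eventually_of_mem (hU.mem_nhds hx) heq) X

end Killing

section Coordinates

variable {n : ℕ} {f g : EuclideanSpace ℝ (Fin n) → ℝ} {x : EuclideanSpace ℝ (Fin n)}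

theorem pd_mul (hf : DifferentiableAt ℝ f x) (hg : DifferentiableAt ℝ g x) (i : Fin n) :
    pd i (fun y ↦ f y * g y) x = f x * pd i g x + pd i f x * g x := by
  simp [pd, fderiv_fun_mul hf hg, mul_comm]

theorem gradient_apply_eq_pd (f : EuclideanSpace ℝ (Fin n) → ℝ) (x : EuclideanSpace ℝ (Fin n))
    (i : Fin n) : ∇ f x i = pd i f x := by
  rw [pd, ← inner_gradient_left, EuclideanSpace.inner_single_right]
  simp

theorem divergence_eq_sum_pd {V : EuclideanSpace ℝ (Fin n) → EuclideanSpace ℝ (Fin n)}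
    (hV : DifferentiableAt ℝ V x) : divergence V x = ∑ i, pd i (fun y ↦ V y i) x := by
  have hcoord (i : Fin n) : HasFDerivAt (fun y ↦ V y i) (EuclideanSpace.proj i ∘L fderiv ℝ V x) x :=
    (EuclideanSpace.proj (𝕜 := ℝ) i).hasFDerivAt.comp x hV.hasFDerivAt
  rw [divergence, LinearMap.trace_eq_sum_inner _ (EuclideanSpace.basisFun (Fin n) ℝ)]
  refine Finset.sum_congr rfl fun i _ ↦ ?_
  rw [pd, (hcoord i).fderiv]
  simp [EuclideanSpace.inner_single_left]

theorem weightedLaplacian_eq_sum_pd {a : EuclideanSpace ℝ (Fin n) → ℝ}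
    (ha : DifferentiableAt ℝ a x) (hf : ContDiffAt ℝ 2 f x) :
    weightedLaplacian a f x = a x * ∑ i, pd i (pd i f) x + ∑ i, pd i a x * pd i f x := by
  have hpd (i : Fin n) : DifferentiableAt ℝ (pd i f) x :=
    (differentiableAt_fderiv hf).clm_apply (differentiableAt_const _)
  rw [weightedLaplacian, divergence_eq_sum_pd (ha.fun_smul (differentiableAt_gradient hf)),
    Finset.mul_sum, ← Finset.sum_add_distrib]
  refine Finset.sum_congr rfl fun i _ ↦ ?_
  simp only [PiLp.smul_apply, smul_eq_mul, gradient_apply_eq_pd, pd_mul ha (hpd i)]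

theorem weightedLaplacian_eq_zero_on_iff_sum_pd {U : Set (EuclideanSpace ℝ (Fin n))}
    {a : EuclideanSpace ℝ (Fin n) → ℝ} (hU : IsOpen U) (ha : DifferentiableOn ℝ a U)
    (hf : ContDiffOn ℝ 2 f U) :
    (∀ x ∈ U, weightedLaplacian a f x = 0) ↔
      ∀ x ∈ U, a x * ∑ i, pd i (pd i f) x + ∑ i, pd i a x * pd i f x = 0 :=
  forall₂_congr fun x hx ↦ by
    rw [weightedLaplacian_eq_sum_pd (ha.differentiableAt (hU.mem_nhds hx))
      (hf.contDiffAt (hU.mem_nhds hx))]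

/-- The infinitesimal rotation `x_j e_k - x_k e_j` in the `(j, k)`-plane, bundled as a linear map so
that its smoothness and its derivative are immediate. -/
noncomputable def rotationField (j k : Fin n) :
    EuclideanSpace ℝ (Fin n) →L[ℝ] EuclideanSpace ℝ (Fin n) :=
  (EuclideanSpace.proj j).smulRight (EuclideanSpace.single k 1)
    - (EuclideanSpace.proj k).smulRight (EuclideanSpace.single j 1)

theorem isKillingOn_rotationField (j k : Fin n) (U : Set (EuclideanSpace ℝ (Fin n))) :
    IsKillingOn (rotationField j k) U := fun x _ ↦ by
  rw [ContinuousLinearMap.fderiv, mem_skewAdjoint_iff_inner]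
  intro v w
  simp only [rotationField, sub_apply, ContinuousLinearMap.smulRight_apply, PiLp.proj_apply,
    inner_sub_left, inner_sub_right, real_inner_smul_left, real_inner_smul_right,
    EuclideanSpace.inner_single_left, EuclideanSpace.inner_single_right, map_one,
    Real.ringHom_apply, one_mul]
  ring

theorem lieDeriv_rotationField (j k : Fin n) (f : EuclideanSpace ℝ (Fin n) → ℝ)
    (x : EuclideanSpace ℝ (Fin n)) :
    lieDeriv (rotationField j k) f x = x j * pd k f x - x k * pd j f x := by
  simp [lieDeriv, rotationField, pd]

end Coordinates

/-- Section 5: for `j ≠ k`, the quantity `T^{j,k} = −x_k ∂_j u + x_j ∂_k u` satisfies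
`a ΔT^{j,k} + ∇a · ∇T^{j,k} = 0` on `U`, in any dimension `n ≥ 2`. -/
theorem stmt9 (n : ℕ) (hn : 2 ≤ n)
    (U : Set (EuclideanSpace ℝ (Fin n))) (hU : IsOpen U)
    (a u : EuclideanSpace ℝ (Fin n) → ℝ)
    (ha : ContDiffOn ℝ (⊤ : ℕ∞) a U) (hapos : ∀ x ∈ U, 0 < a x)
    (hrad : ∀ (j k : Fin n), ∀ x ∈ U, x j * pd k a x - x k * pd j a x = 0)
    (hu : ContDiffOn ℝ (⊤ : ℕ∞) u U)
    (heq : ∀ x ∈ U, a x * (∑ i, pd i (pd i u) x) + ∑ i, pd i a x * pd i u x = 0)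
    (T : Fin n → Fin n → EuclideanSpace ℝ (Fin n) → ℝ)
    (hT : ∀ j k x, T j k x = -(x k) * pd j u x + x j * pd k u x) :
    ∀ (j k : Fin n), j ≠ k → ∀ x ∈ U,
      a x * (∑ i, pd i (pd i (T j k)) x) + ∑ i, pd i a x * pd i (T j k) x = 0 := by
  intro j k _
  have ha₂ : ContDiffOn ℝ 2 a U := contDiffOn_infty.1 ha 2
  have hu₃ : ContDiffOn ℝ 3 u U := contDiffOn_infty.1 hu 3
  have ha₁ : DifferentiableOn ℝ a U := ha₂.differentiableOn two_ne_zero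
  have hX : ContDiffOn ℝ 2 (rotationField j k) U := (rotationField j k).contDiff.contDiffOn
  have hTX : T j k = lieDeriv (rotationField j k) u := funext fun x ↦ by
    rw [hT, lieDeriv_rotationField, neg_mul, neg_add_eq_sub]
  rw [hTX, ← weightedLaplacian_eq_zero_on_iff_sum_pd hU ha₁
    (contDiffOn_lieDeriv hU hX hu₃ two_add_one_eq_three.le)]
  exact stmt9_general hU (isKillingOn_rotationField j k U) hX ha₂
    (by simpa only [lieDeriv_rotationField] using hrad j k) hu₃
    ((weightedLaplacian_eq_zero_on_iff_sum_pd hU ha₁ (hu₃.of_le (by norm_num))).2 heq)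
end

section
/- For every pair j ≠ k, at every point of U one has −(∂_k a)(∂_j R) + (∂_j a)(∂_k R) = a Σ_{i=1}^n (∂_i a)(∂_i T^{j,k}). -/
/-!
In coordinate-free form, `T = ⟪v, x⟫ ∂_w u - ⟪w, x⟫ ∂_v u` and `R = a ∂_x u`. In
`∂_v a ∂_w R - ∂_w a ∂_v R` the terms that differentiate the factor `a` of `R` cancel, leaving
`a (∂_v a ∂_w u - ∂_w a ∂_v u)` and the second-order terms `a (∂_v a D²u(w, x) - ∂_w a D²u(v, x))`.
On the other side, `a ∂_{∇a} T` has the same first-order terms, and second-order terms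
`a (⟪v, x⟫ D²u(∇a, w) - ⟪w, x⟫ D²u(∇a, v))`. Radiality of `a` says that
`⟪v, x⟫ ∇a = (∂_v a) x` for every `v`, so symmetry of `D²u` identifies the two.
-/

open scoped Gradient RealInnerProductSpace

section CoordinateFree

variable {E F : Type*} [NormedAddCommGroup E] [InnerProductSpace ℝ E]
  [NormedAddCommGroup F] [NormedSpace ℝ F] {f : E → F} {x : E}

/-- The Euler operator `f ↦ x · ∇f`, i.e. the derivative of `f` along the position vector. It is
used to write `R` as `a • eulerDeriv u`. -/
noncomputable def eulerDeriv (f : E → F) (x : E) : F :=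
  fderiv ℝ f x x

/-- The infinitesimal rotation of `f` in the plane of `v` and `w`, oriented so that on `ℝⁿ` the
pair `(e_j, e_k)` gives `x_j ∂_k f - x_k ∂_j f`. It expresses both `T^{j,k}` (with `f = u`) and
radiality of `a` (as its vanishing for `f = a`). -/
noncomputable def angularDeriv (v w : E) (f : E → F) (x : E) : F :=
  ⟪v, x⟫ • fderiv ℝ f x w - ⟪w, x⟫ • fderiv ℝ f x v

theorem hasFDerivAt_eulerDeriv (hf : DifferentiableAt ℝ (fderiv ℝ f) x) :
    HasFDerivAt (eulerDeriv f) (fderiv ℝ f x + (fderiv ℝ (fderiv ℝ f) x).flip x) x :=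
  hf.hasFDerivAt.clm_apply (hasFDerivAt_id x)

theorem hasFDerivAt_inner_smul_fderiv (hf : DifferentiableAt ℝ (fderiv ℝ f) x) (v w : E) :
    HasFDerivAt (fun y => ⟪v, y⟫ • fderiv ℝ f y w)
      (⟪v, x⟫ • (fderiv ℝ (fderiv ℝ f) x).flip w + (innerSL ℝ v).smulRight (fderiv ℝ f x w)) x := by
  have hfderiv : HasFDerivAt (fun y => fderiv ℝ f y w) ((fderiv ℝ (fderiv ℝ f) x).flip w) x := by
    simpa using hf.hasFDerivAt.clm_apply (hasFDerivAt_const w x)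
  exact (innerSL ℝ v).hasFDerivAt.smul hfderiv

theorem fderiv_angularDeriv_apply (hf : DifferentiableAt ℝ (fderiv ℝ f) x) (v w h : E) :
    fderiv ℝ (angularDeriv v w f) x h =
      ⟪v, x⟫ • fderiv ℝ (fderiv ℝ f) x h w + ⟪v, h⟫ • fderiv ℝ f x w -
        (⟪w, x⟫ • fderiv ℝ (fderiv ℝ f) x h v + ⟪w, h⟫ • fderiv ℝ f x v) := by
  have hT : HasFDerivAt (angularDeriv v w f) _ x :=
    (hasFDerivAt_inner_smul_fderiv hf v w).sub (hasFDerivAt_inner_smul_fderiv hf w v)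
  rw [hT.fderiv]
  rfl

theorem angularDeriv_eq_zero_of_basis {ι : Type*} (b : Module.Basis ι ℝ E)
    (h : ∀ i j, angularDeriv (b i) (b j) f x = 0) (v w : E) : angularDeriv v w f x = 0 := by
  let B : E →ₗ[ℝ] E →ₗ[ℝ] F := LinearMap.mk₂ ℝ (fun v w => angularDeriv v w f x)
    (fun v₁ v₂ w => by simp only [angularDeriv, inner_add_left, map_add]; module)
    (fun c v w => by simp only [angularDeriv, real_inner_smul_left, map_smul]; module)
    (fun v w₁ w₂ => by simp only [angularDeriv, inner_add_left, map_add]; module)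
    (fun c v w => by simp only [angularDeriv, real_inner_smul_left, map_smul]; module)
  have hB : B = 0 := LinearMap.ext_basis b b h
  exact LinearMap.congr_fun₂ hB v w

theorem inner_smul_gradient_of_angularDeriv_eq_zero [CompleteSpace E] {a : E → ℝ} {v : E}
    (h : ∀ w, angularDeriv v w a x = 0) : ⟪v, x⟫ • ∇ a x = fderiv ℝ a x v • x := by
  refine ext_inner_left ℝ fun w => ?_
  have hw := h w
  simp only [angularDeriv, smul_eq_mul] at hw
  simp only [real_inner_smul_right, inner_gradient_right, conj_trivial]
  linarith

theorem stmt11_general [CompleteSpace E] {a : E → ℝ} {u : E → F} (ha : DifferentiableAt ℝ a x)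
    (hrad : ∀ v w, angularDeriv v w a x = 0) (hu : ContDiffAt ℝ 2 u x) (v w : E) :
    -(fderiv ℝ a x w) • fderiv ℝ (a • eulerDeriv u) x v +
        fderiv ℝ a x v • fderiv ℝ (a • eulerDeriv u) x w =
      a x • fderiv ℝ (angularDeriv v w u) x (∇ a x) := by
  have hu' : DifferentiableAt ℝ (fderiv ℝ u) x :=
    (hu.fderiv_right (m := 1) (by norm_num)).differentiableAt one_ne_zero
  have hsymm : IsSymmSndFDerivAt ℝ u x := hu.isSymmSndFDerivAt (by simp)
  have hR (h : E) : fderiv ℝ (a • eulerDeriv u) x h =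
      a x • (fderiv ℝ u x h + fderiv ℝ (fderiv ℝ u) x x h) + fderiv ℝ a x h • eulerDeriv u x := by
    rw [(ha.hasFDerivAt.smul (hasFDerivAt_eulerDeriv hu')).fderiv, ← hsymm.eq h x]
    rfl
  have hsnd (v w : E) : ⟪v, x⟫ • fderiv ℝ (fderiv ℝ u) x (∇ a x) w =
      fderiv ℝ a x v • fderiv ℝ (fderiv ℝ u) x x w := by
    have hgrad := inner_smul_gradient_of_angularDeriv_eq_zero (hrad v)
    simpa using DFunLike.congr_fun (congrArg (fderiv ℝ (fderiv ℝ u) x) hgrad) w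
  rw [hR, hR, fderiv_angularDeriv_apply hu', hsnd, hsnd]
  simp only [inner_gradient_right, conj_trivial]
  module

end CoordinateFree

section Coordinates

variable {n : ℕ} (f : EuclideanSpace ℝ (Fin n) → ℝ) (x : EuclideanSpace ℝ (Fin n))

theorem sum_mul_pd (v : EuclideanSpace ℝ (Fin n)) : ∑ i, v i * pd i f x = fderiv ℝ f x v := by
  conv_rhs => rw [← (EuclideanSpace.basisFun (Fin n) ℝ).sum_repr v]
  simp [pd]

theorem sum_pd_mul_pd (g : EuclideanSpace ℝ (Fin n) → ℝ) :
    ∑ i, pd i g x * pd i f x = fderiv ℝ f x (∇ g x) := by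
  have hgrad (i : Fin n) : pd i g x = ∇ g x i := by
    simp [pd, ← inner_gradient_left, EuclideanSpace.inner_single_right]
  simp only [hgrad, sum_mul_pd]

theorem angularDeriv_single (j k : Fin n) :
    angularDeriv (EuclideanSpace.single j 1) (EuclideanSpace.single k 1) f x =
      x j * pd k f x - x k * pd j f x := by
  simp [angularDeriv, pd, EuclideanSpace.inner_single_left]

theorem angularDeriv_eq_zero_of_pd (h : ∀ j k, x j * pd k f x - x k * pd j f x = 0)
    (v w : EuclideanSpace ℝ (Fin n)) : angularDeriv v w f x = 0 :=
  angularDeriv_eq_zero_of_basis (EuclideanSpace.basisFun (Fin n) ℝ).toBasis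
    (fun j k => by simpa [angularDeriv_single] using h j k) v w

end Coordinates

/-- Section 5: for `j ≠ k`, one has `−a_k R_j + a_j R_k = a ∑_i a_i (T^{j,k})_i` on `U`,
in any dimension `n ≥ 2`. -/
theorem stmt11 (n : ℕ) (hn : 2 ≤ n)
    (U : Set (EuclideanSpace ℝ (Fin n))) (hU : IsOpen U)
    (a u : EuclideanSpace ℝ (Fin n) → ℝ)
    (ha : ContDiffOn ℝ (⊤ : ℕ∞) a U) (hapos : ∀ x ∈ U, 0 < a x)
    (hrad : ∀ (j k : Fin n), ∀ x ∈ U, x j * pd k a x - x k * pd j a x = 0)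
    (hu : ContDiffOn ℝ (⊤ : ℕ∞) u U)
    (heq : ∀ x ∈ U, a x * (∑ i, pd i (pd i u) x) + ∑ i, pd i a x * pd i u x = 0)
    (T : Fin n → Fin n → EuclideanSpace ℝ (Fin n) → ℝ)
    (hT : ∀ j k x, T j k x = -(x k) * pd j u x + x j * pd k u x)
    (R : EuclideanSpace ℝ (Fin n) → ℝ)
    (hR : ∀ x, R x = a x * ∑ k, x k * pd k u x) :
    ∀ (j k : Fin n), j ≠ k → ∀ x ∈ U,
      -(pd k a x) * pd j R x + pd j a x * pd k R x
        = a x * ∑ i, pd i a x * pd i (T j k) x := by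
  intro j k _ x hx
  have hR' : R = a • eulerDeriv u := funext fun y => by rw [hR, sum_mul_pd]; rfl
  have hT' : T j k = angularDeriv (EuclideanSpace.single j 1) (EuclideanSpace.single k 1) u :=
    funext fun y => by rw [hT, angularDeriv_single]; ring
  rw [hR', hT', sum_pd_mul_pd]
  have hUx : U ∈ nhds x := hU.mem_nhds hx
  exact stmt11_general ((ha.contDiffAt hUx).differentiableAt (by simp))
    (angularDeriv_eq_zero_of_pd a x fun j k => hrad j k x hx)
    ((hu.contDiffAt hUx).of_le (WithTop.coe_le_coe.2 le_top)) _ _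
end
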